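/- Let Λ and Δ be simple graphs and f : Λ → Δ a graph homomorphism (adjacency-preserving map on vertices). Suppose (i) Λ is connected, (ii) Δ is a tree (connected and acyclic), and (iii) for every vertex u of Λ, the restriction of f to the neighbor set of u is injective (f is injective on the star of every vertex). Then f is injective on vertices. -/

import Mathlib

/-!
Injectivity on stars means that `f` creates no backtracking, and in an acyclic graph a walk without
backtracking is a path. So `f` maps every path of `Λ` to a path of `Δ`
(`isPath_map_of_injOn_stars`). A path has no repeated vertices, so the images of the vertices along a
path from `u` to `v` are distinct; in particular `f u = f v` forces `u = v`.
-/

/-- The step of the induction: let `u` be adjacent to the start `v` of the path. If `f u` lay on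
the image path, acyclicity of `Δ` would make it the second vertex of that path, so the second vertex
of the original path would be `u`, by injectivity on the star of `v`. -/
theorem isPath_map_of_injOn_stars {V W : Type*}
    {Λ : SimpleGraph V} {Δ : SimpleGraph W} (f : Λ →g Δ) (hΔ : Δ.IsAcyclic)
    (hstar : ∀ u : V, Set.InjOn f (Λ.neighborSet u)) {u v : V} (p : Λ.Walk u v)
    (hp : p.IsPath) : (p.map f).IsPath := by
  induction p with
  | nil => simp
  | @cons u v w h p ih =>
    rw [SimpleGraph.Walk.cons_isPath_iff] at hp
    obtain ⟨hp, hu⟩ := hp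
    rw [SimpleGraph.Walk.map_cons, SimpleGraph.Walk.cons_isPath_iff]
    refine ⟨ih hp, fun hmem => ?_⟩
    have hsnd := hΔ.eq_snd_of_adj_start (ih hp) (f.map_adj h).symm hmem
    cases p with
    | nil =>
      have hne := (f.map_adj h).ne
      simp_all
    | @cons _ x _ h' q =>
      have hux : u = x := hstar v h.symm h' (by simpa using hsnd)
      subst hux
      simp at hu

/-- A graph homomorphism `f` from a connected simple graph `Λ`
to a tree `Δ` which is injective on the neighbor set (star) of every vertex is
injective on vertices. -/
theorem hom_injective_of_injOn_stars {V W : Type*}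
    {Λ : SimpleGraph V} {Δ : SimpleGraph W} (f : Λ →g Δ)
    (hΛ : Λ.Connected) (hΔ : Δ.IsTree)
    (hstar : ∀ u : V, Set.InjOn f (Λ.neighborSet u)) :
    Function.Injective f := by
  intro u v huv
  obtain ⟨p, hp⟩ := (hΛ.preconnected u v).exists_isPath
  have hmap := isPath_map_of_injOn_stars f hΔ.isAcyclic hstar p hp
  exact hmap.injOn_support_of_isPath_map (by simp) (by simp) huv
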